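/- Let Ω be a nonempty bounded open set in Euclidean space ℝⁿ with smooth boundary, and let Γ₁ ≤ Γ₂ ≤ ⋯ ≤ Γ_{n+1} be clamped plate eigenvalues on Ω with orthonormal eigenfunctions u₁,…,u_{n+1} satisfying the Rayleigh–Ritz property (as in the context). Then Σ_{i=1}^{n} (Γ_{i+1} − Γ₁)^{1/2} ≤ (8(n+2)Γ₁)^{1/2}. -/

import Mathlib

/-!
Let `w` be the first eigenfunction. For a unit vector `e` and a constant `a` consider the trial
function `φ = (⟪e, x⟫ - a) w`. Since the weight is affine,
`Δ²φ = (⟪e, x⟫ - a) Δ²w + 4 ∂ₑ Δw`, and integration by parts gives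
`∫ φ ∂ₑΔw = ½ ‖∇w‖² + ‖∂ₑw‖²` and `∫ φ ∂ₑw = -½`. Gram–Schmidt applied to the vectors
`∫ x w uⱼ` produces an orthonormal basis `e₁, …, eₙ` such that, for suitable `aⱼ`, the function
`φⱼ` is orthogonal to the first `j` eigenfunctions. The Rayleigh–Ritz property then yields
`(Γ_{j+1} - Γ₁) ‖φⱼ‖² ≤ 2 ‖∇w‖² + 4 ‖∂ⱼw‖²`. Combining this with
`0 ≤ ‖∂ⱼw + δ (Γ_{j+1} - Γ₁)^{1/2} φⱼ‖²` gives
`δ (Γ_{j+1} - Γ₁)^{1/2} ≤ δ² (2 ‖∇w‖² + 4 ‖∂ⱼw‖²) + ‖∂ⱼw‖²`. Summing over `j` with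
`δ = (2n + 4)^{-1/2}`, together with `‖∇w‖⁴ ≤ ‖w‖² ‖Δw‖² = Γ₁`, proves the claim
(`sum_le_of_energy_bounds`).

No regularity of `∂Ω` is needed: the divergence theorem `∫_Ω ∂ᵥg = 0`, for smooth `g` vanishing on
`∂Ω`, is obtained in `setIntegral_fderiv_eq_zero` by cutting off with the Lipschitz functions
`min 1 (m · dist(x, Ωᶜ))` and letting `m → ∞`.
-/

open MeasureTheory Real
open scoped RealInnerProductSpace

/-- The Laplacian `Δf = div (∇f)` of `f : ℝⁿ → ℝ`, as the sum of second partial derivatives. -/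
noncomputable def lap {n : ℕ} (f : EuclideanSpace ℝ (Fin n) → ℝ) (x : EuclideanSpace ℝ (Fin n)) : ℝ :=
  ∑ i : Fin n, fderiv ℝ (fun y => fderiv ℝ f y (EuclideanSpace.single i 1)) x
    (EuclideanSpace.single i 1)

/-- The bi-Laplacian `Δ²f = Δ (Δ f)`. -/
noncomputable def bilap {n : ℕ} (f : EuclideanSpace ℝ (Fin n) → ℝ) :
    EuclideanSpace ℝ (Fin n) → ℝ :=
  lap (lap f)

/-! ### The divergence theorem on an arbitrary bounded open set -/

section Divergence

open Filter Topology

/-- The boundary of `Ω` may be irregular, even of positive measure. The proof integrates by parts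
against the Lipschitz cutoff `h m = min 1 (m · dist(x, Ωᶜ))`: the term containing the derivative of
`h m` tends to zero boundedly because `|g| ≤ K · dist(x, Ωᶜ)` while `|∂ᵥ(h m)| ≤ m ‖v‖` is
supported in `{m · dist(x, Ωᶜ) < 1}`. -/
theorem setIntegral_fderiv_eq_zero {n : ℕ} (hn : 1 ≤ n) {Ω : Set (EuclideanSpace ℝ (Fin n))}
    (hΩo : IsOpen Ω) (hΩb : Bornology.IsBounded Ω)
    {g : EuclideanSpace ℝ (Fin n) → ℝ} (hg : ContDiff ℝ (⊤ : ℕ∞) g) (hgc : HasCompactSupport g)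
    (hbd : ∀ x ∈ frontier Ω, g x = 0) (v : EuclideanSpace ℝ (Fin n)) :
    ∫ x in Ω, fderiv ℝ g x v = 0 := by
  have : Nonempty (Fin n) := ⟨⟨0, hn⟩⟩
  have hcne : (Ωᶜ).Nonempty := by
    rw [Set.nonempty_compl]
    rintro rfl
    exact NormedSpace.unbounded_univ ℝ (EuclideanSpace ℝ (Fin n)) hΩb
  obtain ⟨K, hK⟩ : ∃ K, LipschitzWith K g :=
    ContDiff.lipschitzWith_of_hasCompactSupport hgc hg (by simp)
  set d : EuclideanSpace ℝ (Fin n) → ℝ := fun x => Metric.infDist x Ωᶜ with hd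
  have hd0 : ∀ x, 0 ≤ d x := fun x => Metric.infDist_nonneg
  have hdΩ : ∀ x, x ∉ Ω → d x = 0 := fun x hx => Metric.infDist_zero_of_mem hx
  have hdpos : ∀ x ∈ Ω, 0 < d x := fun x hx =>
    (hΩo.isClosed_compl.notMem_iff_infDist_pos hcne).1 (by simpa using hx)
  have hdc : Continuous d := Metric.continuous_infDist_pt _
  -- the segment from `x` to a nearest point of `Ωᶜ` meets the boundary, where `g` vanishes
  have hgd : ∀ x ∈ Ω, |g x| ≤ K * d x := by
    intro x hx
    obtain ⟨y, hy, hxy⟩ := hΩo.isClosed_compl.exists_infDist_eq_dist hcne x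
    obtain ⟨z, hz, hzf⟩ : (segment ℝ x y ∩ frontier Ω).Nonempty := by
      by_contra hcon
      have hsub : ∀ z ∈ segment ℝ x y, z ∉ Ω → z ∈ (closure Ω)ᶜ := fun z hz hzΩ hzc =>
        hcon ⟨z, hz, hzc, by rwa [hΩo.interior_eq]⟩
      obtain ⟨z, -, hz1, hz2⟩ := (convex_segment x y).isPreconnected Ω (closure Ω)ᶜ hΩo
        isClosed_closure.isOpen_compl
        (fun z hz => (em (z ∈ Ω)).imp id (hsub z hz))
        ⟨x, left_mem_segment ℝ x y, hx⟩
        ⟨y, right_mem_segment ℝ x y, hsub y (right_mem_segment ℝ x y) hy⟩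
      exact hz2 (subset_closure hz1)
    have h1 := hK.dist_le_mul x z
    rw [hbd z hzf, Real.dist_eq, sub_zero] at h1
    refine h1.trans (mul_le_mul_of_nonneg_left ?_ K.2)
    rw [hd]; dsimp only; rw [hxy]
    have := dist_add_dist_of_mem_segment hz
    linarith [dist_nonneg (x := z) (y := y)]
  set h : ℕ → EuclideanSpace ℝ (Fin n) → ℝ := fun m x => min 1 (m * d x) with hh
  have hhL : ∀ m : ℕ, LipschitzWith m (h m) := by
    intro m
    have h1 : LipschitzWith m (fun x => (m : ℝ) * d x) := by
      refine LipschitzWith.of_dist_le_mul fun x y => ?_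
      have h2 := (Metric.lipschitz_infDist_pt (Ωᶜ)).dist_le_mul x y
      rw [Real.dist_eq, ← mul_sub, abs_mul, Nat.abs_cast, NNReal.coe_natCast]
      refine mul_le_mul_of_nonneg_left ?_ (Nat.cast_nonneg _)
      simpa [Real.dist_eq] using h2
    exact h1.const_min 1
  -- Points outside `Ω` are minima of the cutoff and points with `1 ≤ m * d x` are maxima, so the
  -- line derivative is zero there (by convention if it does not exist).
  have hmin : ∀ m x, x ∉ Ω → lineDeriv ℝ (h m) x v = 0 := by
    intro m x hx
    apply IsLocalMin.deriv_eq_zero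
    refine Eventually.of_forall fun t => ?_
    simp only [hh, zero_smul, add_zero, hdΩ x hx, mul_zero]
    simp only [min_eq_right zero_le_one]
    exact le_min zero_le_one (mul_nonneg (Nat.cast_nonneg _) (hd0 _))
  have hmax : ∀ (m : ℕ) x, 1 ≤ m * d x → lineDeriv ℝ (h m) x v = 0 := by
    intro m x hx
    apply IsLocalMax.deriv_eq_zero
    refine Eventually.of_forall fun t => ?_
    simp only [hh, zero_smul, add_zero, min_eq_left hx]
    exact min_le_left _ _
  have key : ∀ m, ∫ x, lineDeriv ℝ (h m) x v * g x = ∫ x, lineDeriv ℝ g x (-v) * h m x :=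
    fun m => (hhL m).integral_lineDeriv_mul_eq hK hgc v
  have hΩfin : volume Ω ≠ ⊤ := hΩb.measure_lt_top.ne
  have L1 : Tendsto (fun m => ∫ x, lineDeriv ℝ (h m) x v * g x) atTop 
      (𝓝 (∫ _ : EuclideanSpace ℝ (Fin n), (0:ℝ))) := by
    apply tendsto_integral_of_dominated_convergence (Ω.indicator fun _ => K * ‖v‖)
    · intro m
      exact ((aestronglyMeasurable_lineDeriv (hhL m).continuous _)).mul
        hg.continuous.aestronglyMeasurable
    · exact (integrable_indicator_iff hΩo.measurableSet).2 (integrableOn_const hΩfin)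
    · intro m
      refine Eventually.of_forall fun x => ?_
      by_cases hx : x ∈ Ω
      · rw [Set.indicator_of_mem hx]
        by_cases h1 : 1 ≤ m * d x
        · rw [hmax m x h1, zero_mul, norm_zero]; positivity
        · push Not at h1
          have h2 : ‖lineDeriv ℝ (h m) x v‖ ≤ m * ‖v‖ := by
            simpa using norm_lineDeriv_le_of_lipschitz ℝ (hhL m) (x₀ := x) (v := v)
          rw [norm_mul]
          calc _ ≤ (m * ‖v‖) * (K * d x) :=
                mul_le_mul h2 (hgd x hx) (abs_nonneg _) (by positivity)
            _ = (K * ‖v‖) * (m * d x) := by ring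
            _ ≤ (K * ‖v‖) * 1 := mul_le_mul_of_nonneg_left h1.le (by positivity)
            _ = _ := mul_one _
      · rw [hmin m x hx, zero_mul, norm_zero, Set.indicator_of_notMem hx]
    · refine Eventually.of_forall fun x => ?_
      apply tendsto_const_nhds.congr'
      by_cases hx : x ∈ Ω
      · obtain ⟨m, hm⟩ := exists_nat_gt (1 / d x)
        filter_upwards [eventually_ge_atTop m] with k hk
        rw [hmax k x, zero_mul]
        have : (m:ℝ) ≤ k := by exact_mod_cast hk
        rw [div_lt_iff₀ (hdpos x hx)] at hm
        nlinarith [hdpos x hx]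
      · exact Eventually.of_forall fun m => by simp only [hmin m x hx, zero_mul]
  have hlg : ∀ x, lineDeriv ℝ g x (-v) = -fderiv ℝ g x v := by
    intro x
    rw [((hg.differentiable (by simp)) x).lineDeriv_eq_fderiv, map_neg]
  have hDc : Continuous fun x => fderiv ℝ g x v :=
    (hg.continuous_fderiv (by simp)).clm_apply continuous_const
  have hDs : HasCompactSupport fun x => fderiv ℝ g x v := hgc.fderiv_apply (𝕜 := ℝ) v
  have L2 : Tendsto (fun m => ∫ x, lineDeriv ℝ g x (-v) * h m x) atTop
      (𝓝 (∫ x, Ω.indicator (fun x => -fderiv ℝ g x v) x)) := by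
    apply tendsto_integral_of_dominated_convergence (fun x => ‖fderiv ℝ g x v‖)
    · intro m
      simp only [hlg]
      exact (hDc.neg.mul (hhL m).continuous).aestronglyMeasurable
    · exact (hDc.integrable_of_hasCompactSupport hDs).norm
    · intro m
      refine Eventually.of_forall fun x => ?_
      rw [hlg, norm_mul, norm_neg]
      refine mul_le_of_le_one_right (norm_nonneg _) ?_
      rw [Real.norm_eq_abs, abs_le]
      have : 0 ≤ h m x := le_min zero_le_one (mul_nonneg (Nat.cast_nonneg _) (hd0 _))
      exact ⟨by linarith, min_le_left _ _⟩
    · refine Eventually.of_forall fun x => ?_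
      apply tendsto_const_nhds.congr'
      by_cases hx : x ∈ Ω
      · obtain ⟨m, hm⟩ := exists_nat_gt (1 / d x)
        filter_upwards [eventually_ge_atTop m] with k hk
        have h1 : 1 ≤ k * d x := by
          have : (m:ℝ) ≤ k := by exact_mod_cast hk
          rw [div_lt_iff₀ (hdpos x hx)] at hm
          nlinarith [hdpos x hx]
        simp only [hh]
        rw [min_eq_left h1, mul_one, hlg, Set.indicator_of_mem hx]
      · refine Eventually.of_forall fun m => ?_
        simp only [hh]
        rw [hdΩ x hx, mul_zero, min_eq_right zero_le_one, mul_zero, Set.indicator_of_notMem hx]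
  have hfin := tendsto_nhds_unique L1 ((tendsto_congr key).2 L2)
  rw [integral_zero, integral_indicator hΩo.measurableSet, integral_neg] at hfin
  linarith

end Divergence

/-! ### Directional derivatives and the Laplacian -/

/-- The directional derivative `∂ᵥf`. -/
noncomputable def dd {n : ℕ} (v : EuclideanSpace ℝ (Fin n)) (f : EuclideanSpace ℝ (Fin n) → ℝ) :
    EuclideanSpace ℝ (Fin n) → ℝ :=
  fun x => fderiv ℝ f x v

/-- Smooth functions with compact support in `ℝⁿ` (not necessarily contained in `Ω`). -/
structure IsTest {n : ℕ} (f : EuclideanSpace ℝ (Fin n) → ℝ) : Prop where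
  smooth : ContDiff ℝ (⊤ : ℕ∞) f
  cpt : HasCompactSupport f

section Calculus

variable {n : ℕ} {f g : EuclideanSpace ℝ (Fin n) → ℝ}

theorem lap_eq_sum_dd (f : EuclideanSpace ℝ (Fin n) → ℝ) (x : EuclideanSpace ℝ (Fin n)) :
    lap f x = ∑ i : Fin n, dd (EuclideanSpace.single i 1) (dd (EuclideanSpace.single i 1) f) x :=
  rfl

theorem contDiff_dd (hf : ContDiff ℝ (⊤ : ℕ∞) f) (v : EuclideanSpace ℝ (Fin n)) :
    ContDiff ℝ (⊤ : ℕ∞) (dd v f) :=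
  (hf.fderiv_right (m := (⊤ : ℕ∞)) (by simp)).clm_apply contDiff_const

theorem dd_mul (hf : ContDiff ℝ (⊤ : ℕ∞) f) (hg : ContDiff ℝ (⊤ : ℕ∞) g)
    (v : EuclideanSpace ℝ (Fin n)) :
    dd v (fun x => f x * g x) = fun x => f x * dd v g x + dd v f x * g x := by
  funext x
  have h := fderiv_mul (hf.differentiable (by simp) x) (hg.differentiable (by simp) x)
  simp only [dd]
  change fderiv ℝ (f * g) x v = _
  rw [h]
  simp [mul_comm]

theorem dd_add (hf : ContDiff ℝ (⊤ : ℕ∞) f) (hg : ContDiff ℝ (⊤ : ℕ∞) g)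
    (v : EuclideanSpace ℝ (Fin n)) :
    dd v (fun x => f x + g x) = fun x => dd v f x + dd v g x := by
  funext x
  have h := fderiv_add (hf.differentiable (by simp) x) (hg.differentiable (by simp) x)
  simp only [dd]
  change fderiv ℝ (f + g) x v = _
  rw [h]
  simp

theorem dd_const_mul (hf : ContDiff ℝ (⊤ : ℕ∞) f) (c : ℝ) (v : EuclideanSpace ℝ (Fin n)) :
    dd v (fun x => c * f x) = fun x => c * dd v f x := by
  funext x
  simp only [dd]
  rw [fderiv_const_mul (hf.differentiable (by simp) x)]
  simp

theorem dd_sum {ι : Type*} (s : Finset ι) {F : ι → EuclideanSpace ℝ (Fin n) → ℝ}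
    (hF : ∀ i, ContDiff ℝ (⊤ : ℕ∞) (F i)) (v : EuclideanSpace ℝ (Fin n)) :
    dd v (fun x => ∑ i ∈ s, F i x) = fun x => ∑ i ∈ s, dd v (F i) x := by
  funext x
  simp only [dd]
  rw [fderiv_fun_sum fun i _ => (hF i).differentiable (by simp) x]
  simp

theorem dd_comm (hf : ContDiff ℝ (⊤ : ℕ∞) f) (v w : EuclideanSpace ℝ (Fin n)) :
    dd v (dd w f) = dd w (dd v f) := by
  funext x
  have hd : DifferentiableAt ℝ (fderiv ℝ f) x :=
    (hf.fderiv_right (m := (⊤ : ℕ∞)) (by simp)).differentiable (by simp) x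
  have key : ∀ a b, dd a (dd b f) x = fderiv ℝ (fderiv ℝ f) x a b := by
    intro a b
    change fderiv ℝ (fun y => fderiv ℝ f y b) x a = _
    rw [fderiv_clm_apply hd (differentiableAt_const b)]
    simp
  rw [key, key]
  exact (hf.contDiffAt.isSymmSndFDerivAt (by simpa using WithTop.coe_le_coe.2 (le_top : (2 : ℕ∞) ≤ ⊤))).eq v w

theorem contDiff_lap (hf : ContDiff ℝ (⊤ : ℕ∞) f) : ContDiff ℝ (⊤ : ℕ∞) (lap f) := by
  have : lap f = fun x => ∑ i : Fin n,
      dd (EuclideanSpace.single i 1) (dd (EuclideanSpace.single i 1) f) x := rfl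
  rw [this]
  exact ContDiff.sum fun i _ => contDiff_dd (contDiff_dd hf _) _

theorem dd_lap (hf : ContDiff ℝ (⊤ : ℕ∞) f) (v : EuclideanSpace ℝ (Fin n)) :
    dd v (lap f) = lap (dd v f) := by
  have : lap f = fun x => ∑ i : Fin n,
      dd (EuclideanSpace.single i 1) (dd (EuclideanSpace.single i 1) f) x := rfl
  rw [this, dd_sum _ fun i => contDiff_dd (contDiff_dd hf _) _]
  funext x
  rw [lap_eq_sum_dd]
  refine Finset.sum_congr rfl fun i _ => ?_
  rw [dd_comm (contDiff_dd hf _), dd_comm hf]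

theorem lap_add (hf : ContDiff ℝ (⊤ : ℕ∞) f) (hg : ContDiff ℝ (⊤ : ℕ∞) g) :
    lap (fun x => f x + g x) = fun x => lap f x + lap g x := by
  funext x
  simp only [lap_eq_sum_dd]
  rw [← Finset.sum_add_distrib]
  refine Finset.sum_congr rfl fun i _ => ?_
  rw [dd_add hf hg, dd_add (contDiff_dd hf _) (contDiff_dd hg _)]

theorem lap_const_mul (hf : ContDiff ℝ (⊤ : ℕ∞) f) (c : ℝ) :
    lap (fun x => c * f x) = fun x => c * lap f x := by
  funext x
  simp only [lap_eq_sum_dd]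
  rw [Finset.mul_sum]
  refine Finset.sum_congr rfl fun i _ => ?_
  rw [dd_const_mul hf, dd_const_mul (contDiff_dd hf _)]

theorem sum_mul_dd (f : EuclideanSpace ℝ (Fin n) → ℝ) (e x : EuclideanSpace ℝ (Fin n)) :
    ∑ i, e i * dd (EuclideanSpace.single i 1) f x = dd e f x := by
  have he : e = ∑ i, e i • EuclideanSpace.single i (1 : ℝ) := by
    have h := (EuclideanSpace.basisFun (Fin n) ℝ).sum_repr e
    simpa using h.symm
  conv_rhs => rw [he]
  simp only [dd, map_sum, map_smul, smul_eq_mul]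

theorem contDiff_aff (e : EuclideanSpace ℝ (Fin n)) (a : ℝ) :
    ContDiff ℝ (⊤ : ℕ∞) (fun x : EuclideanSpace ℝ (Fin n) => ⟪e, x⟫ - a) :=
  (contDiff_const.inner ℝ contDiff_id).sub contDiff_const

theorem dd_aff (e : EuclideanSpace ℝ (Fin n)) (a : ℝ) (v : EuclideanSpace ℝ (Fin n)) :
    dd v (fun x : EuclideanSpace ℝ (Fin n) => ⟪e, x⟫ - a) = fun _ => ⟪e, v⟫ := by
  funext x
  simp only [dd]
  rw [fderiv_sub_const]
  have : HasFDerivAt (fun x : EuclideanSpace ℝ (Fin n) => ⟪e, x⟫) (innerSL ℝ e) x :=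
    (innerSL ℝ e).hasFDerivAt
  rw [this.fderiv]
  simp

theorem lap_aff_mul (hf : ContDiff ℝ (⊤ : ℕ∞) f) (e : EuclideanSpace ℝ (Fin n)) (a : ℝ) :
    lap (fun x => (⟪e, x⟫ - a) * f x) = fun x => (⟪e, x⟫ - a) * lap f x + 2 * dd e f x := by
  funext x
  rw [lap_eq_sum_dd, lap_eq_sum_dd, ← sum_mul_dd f e, Finset.mul_sum, Finset.mul_sum,
    ← Finset.sum_add_distrib]
  refine Finset.sum_congr rfl fun i _ => ?_
  have hp := contDiff_aff e a
  have hD := contDiff_dd hf (EuclideanSpace.single i 1)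
  rw [dd_mul hp hf, dd_aff, dd_add (hp.mul hD) (contDiff_const.mul hf), dd_mul hp hD, dd_aff,
    dd_const_mul hf]
  simp [EuclideanSpace.inner_single_right]
  ring

theorem bilap_aff_mul (hf : ContDiff ℝ (⊤ : ℕ∞) f) (e : EuclideanSpace ℝ (Fin n)) (a : ℝ) :
    bilap (fun x => (⟪e, x⟫ - a) * f x) =
      fun x => (⟪e, x⟫ - a) * bilap f x + 4 * dd e (lap f) x := by
  have hp := contDiff_aff e a
  have hL := contDiff_lap hf
  have hD := contDiff_dd hf e
  simp only [bilap]
  rw [lap_aff_mul hf, lap_add (hp.mul hL) (contDiff_const.mul hD), lap_aff_mul hL,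
    lap_const_mul hD, dd_lap hf]
  funext x
  ring

end Calculus

namespace IsTest

variable {n : ℕ} {f g : EuclideanSpace ℝ (Fin n) → ℝ}

theorem dd (hf : IsTest f) (v : EuclideanSpace ℝ (Fin n)) : IsTest (dd v f) :=
  ⟨contDiff_dd hf.smooth v, hf.cpt.fderiv_apply (𝕜 := ℝ) v⟩

theorem mul_left (hf : IsTest f) (hg : ContDiff ℝ (⊤ : ℕ∞) g) : IsTest fun x => g x * f x :=
  ⟨hg.mul hf.smooth, hf.cpt.mul_left⟩

theorem mul (hf : IsTest f) (hg : IsTest g) : IsTest fun x => f x * g x :=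
  hg.mul_left hf.smooth

theorem add (hf : IsTest f) (hg : IsTest g) : IsTest fun x => f x + g x :=
  ⟨hf.smooth.add hg.smooth, hf.cpt.add hg.cpt⟩

theorem sum {ι : Type*} (s : Finset ι) {F : ι → EuclideanSpace ℝ (Fin n) → ℝ}
    (hF : ∀ i, IsTest (F i)) : IsTest fun x => ∑ i ∈ s, F i x := by
  classical
  induction s using Finset.induction_on with
  | empty => exact ⟨by simpa using contDiff_const, by simpa using! HasCompactSupport.zero⟩
  | insert i s hi ih => simpa [Finset.sum_insert hi] using (hF i).add ih

theorem lap (hf : IsTest f) : IsTest (lap f) :=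
  IsTest.sum Finset.univ fun i => (hf.dd (EuclideanSpace.single i 1)).dd (EuclideanSpace.single i 1)

theorem int (hf : IsTest f) (Ω : Set (EuclideanSpace ℝ (Fin n))) :
    Integrable f (volume.restrict Ω) :=
  (hf.smooth.continuous.integrable_of_hasCompactSupport hf.cpt).integrableOn

end IsTest

/-! ### Integration by parts -/

theorem ibp {n : ℕ} (hn : 1 ≤ n) {Ω : Set (EuclideanSpace ℝ (Fin n))}
    (hΩo : IsOpen Ω) (hΩb : Bornology.IsBounded Ω)
    {f g : EuclideanSpace ℝ (Fin n) → ℝ} (hf : IsTest f) (hg : IsTest g)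
    (hbd : ∀ x ∈ frontier Ω, f x = 0) (v : EuclideanSpace ℝ (Fin n)) :
    ∫ x in Ω, f x * dd v g x = -∫ x in Ω, dd v f x * g x := by
  have h := setIntegral_fderiv_eq_zero hn hΩo hΩb (hf.mul hg).smooth (hf.mul hg).cpt
    (fun x hx => by simp [hbd x hx]) v
  change ∫ x in Ω, dd v (fun x => f x * g x) x = 0 at h
  rw [dd_mul hf.smooth hg.smooth, integral_add ((hf.mul (hg.dd v)).int Ω)
    (((hf.dd v).mul hg).int Ω)] at h
  linarith

theorem ibp_lap {n : ℕ} (hn : 1 ≤ n) {Ω : Set (EuclideanSpace ℝ (Fin n))}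
    (hΩo : IsOpen Ω) (hΩb : Bornology.IsBounded Ω)
    {f g : EuclideanSpace ℝ (Fin n) → ℝ} (hf : IsTest f) (hg : IsTest g)
    (hbd : ∀ x ∈ frontier Ω, f x = 0) :
    ∫ x in Ω, f x * lap g x =
      -∑ i, ∫ x in Ω, dd (EuclideanSpace.single i 1) f x * dd (EuclideanSpace.single i 1) g x := by
  simp only [lap_eq_sum_dd, Finset.mul_sum]
  rw [integral_finsetSum _ fun i _ => (hf.mul ((hg.dd _).dd _)).int Ω, ← Finset.sum_neg_distrib]
  exact Finset.sum_congr rfl fun i _ => ibp hn hΩo hΩb hf (hg.dd _) hbd _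

/-- The expansion of `0 ≤ ∫ (f + c g)²`. -/
theorem quadratic_nonneg {n : ℕ} (Ω : Set (EuclideanSpace ℝ (Fin n)))
    {f g : EuclideanSpace ℝ (Fin n) → ℝ} (hf : IsTest f) (hg : IsTest g) (c : ℝ) :
    0 ≤ (∫ x in Ω, f x ^ 2) + 2 * c * (∫ x in Ω, f x * g x) + c ^ 2 * ∫ x in Ω, g x ^ 2 := by
  have i1 : Integrable (fun x => f x ^ 2) (volume.restrict Ω) := by
    simpa only [pow_two] using (hf.mul hf).int Ω
  have i2 : Integrable (fun x => 2 * c * (f x * g x)) (volume.restrict Ω) :=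
    ((hf.mul hg).int Ω).const_mul _
  have i3 : Integrable (fun x => c ^ 2 * g x ^ 2) (volume.restrict Ω) := by
    simpa only [pow_two] using ((hg.mul hg).int Ω).const_mul _
  have i12 : Integrable (fun x => f x ^ 2 + 2 * c * (f x * g x)) (volume.restrict Ω) := i1.add i2
  rw [← integral_const_mul, ← integral_const_mul, ← integral_add i1 i2, ← integral_add i12 i3]
  refine integral_nonneg fun x => ?_
  have : f x ^ 2 + 2 * c * (f x * g x) + c ^ 2 * g x ^ 2 = (f x + c * g x) ^ 2 := by ring
  simp only [this]
  exact sq_nonneg _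

section Core

variable {n : ℕ} {Ω : Set (EuclideanSpace ℝ (Fin n))} {w : EuclideanSpace ℝ (Fin n) → ℝ}

theorem integral_mul_bilap (hn : 1 ≤ n) (hΩo : IsOpen Ω) (hΩb : Bornology.IsBounded Ω)
    (hw : IsTest w) (hw0 : ∀ x ∈ frontier Ω, w x = 0)
    (hw1 : ∀ x ∈ frontier Ω, fderiv ℝ w x = 0) :
    ∫ x in Ω, w x * bilap w x = ∫ x in Ω, lap w x ^ 2 := by
  have h1 : ∫ x in Ω, w x * bilap w x = _ := ibp_lap hn hΩo hΩb hw hw.lap hw0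
  rw [h1, ← Finset.sum_neg_distrib]
  have h2 : ∫ x in Ω, lap w x ^ 2 = ∫ x in Ω, ∑ i : Fin n,
      dd (EuclideanSpace.single i 1) (dd (EuclideanSpace.single i 1) w) x * lap w x := by
    refine integral_congr_ae (Filter.Eventually.of_forall fun x => ?_)
    simp only [pow_two, ← Finset.sum_mul, ← lap_eq_sum_dd]
  rw [h2, integral_finsetSum _ fun i _ => (((hw.dd _).dd _).mul hw.lap).int Ω]
  refine Finset.sum_congr rfl fun i _ => ?_
  rw [ibp hn hΩo hΩb (hw.dd _) hw.lap (fun x hx => by simp [dd, hw1 x hx]), neg_neg]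

/-- The Dirichlet energy `∫_Ω |∇w|²`. -/
noncomputable def energy {n : ℕ} (Ω : Set (EuclideanSpace ℝ (Fin n)))
    (w : EuclideanSpace ℝ (Fin n) → ℝ) : ℝ :=
  ∑ i, ∫ x in Ω, dd (EuclideanSpace.single i 1) w x ^ 2

theorem integral_mul_lap (hn : 1 ≤ n) (hΩo : IsOpen Ω) (hΩb : Bornology.IsBounded Ω)
    (hw : IsTest w) (hw0 : ∀ x ∈ frontier Ω, w x = 0) :
    ∫ x in Ω, w x * lap w x = -energy Ω w := by
  rw [ibp_lap hn hΩo hΩb hw hw hw0, energy]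
  simp only [pow_two]

/-- `‖∇w‖⁴ = (∫ w Δw)² ≤ ‖w‖² ‖Δw‖²` by Cauchy–Schwarz, and `‖Δw‖² = ∫ w Δ²w`. -/
theorem energy_sq_le (hn : 1 ≤ n) (hΩo : IsOpen Ω) (hΩb : Bornology.IsBounded Ω)
    (hw : IsTest w) (hw0 : ∀ x ∈ frontier Ω, w x = 0)
    (hw1 : ∀ x ∈ frontier Ω, fderiv ℝ w x = 0) (hnorm : ∫ x in Ω, w x ^ 2 = 1) :
    energy Ω w ^ 2 ≤ ∫ x in Ω, w x * bilap w x := by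
  have h := quadratic_nonneg Ω hw.lap hw (energy Ω w)
  simp only [mul_comm (lap w _)] at h
  rw [hnorm, integral_mul_lap hn hΩo hΩb hw hw0,
    ← integral_mul_bilap hn hΩo hΩb hw hw0 hw1] at h
  linarith

theorem integral_aff_mul_dd (hn : 1 ≤ n) (hΩo : IsOpen Ω) (hΩb : Bornology.IsBounded Ω)
    (hw : IsTest w) (hw0 : ∀ x ∈ frontier Ω, w x = 0)
    {e : EuclideanSpace ℝ (Fin n)} (he : ‖e‖ = 1) (a : ℝ) :
    ∫ x in Ω, ((⟪e, x⟫ - a) * w x) * dd e w x = -(1 / 2) * ∫ x in Ω, w x ^ 2 := by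
  have hp := contDiff_aff e a
  have h := ibp hn hΩo hΩb (hw.mul_left hp) hw (fun x hx => by simp [hw0 x hx]) e
  rw [dd_mul hp hw.smooth, dd_aff] at h
  have h2 : ∫ x in Ω, ((⟪e, x⟫ - a) * dd e w x + ⟪e, e⟫ * w x) * w x =
      ∫ x in Ω, (((⟪e, x⟫ - a) * w x) * dd e w x + w x ^ 2) := by
    congr 1; funext x
    rw [real_inner_self_eq_norm_sq, he]; ring
  rw [h2, integral_add (((hw.mul_left hp).mul (hw.dd e)).int Ω)
    (by simpa only [pow_two] using (hw.mul hw).int Ω)] at h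
  linarith

/-- Moving derivatives off `Δw` gives `-∫ w Δw - ∫ p ∂ₑw Δw` with `p = ⟪e, x⟫ - a`. The first
term is the energy; the second is computed from `∂ₑ((∂ᵢw)²) = 2 ∂ᵢw ∂ₑ∂ᵢw`. -/
theorem integral_aff_mul_dd_lap (hn : 1 ≤ n) (hΩo : IsOpen Ω) (hΩb : Bornology.IsBounded Ω)
    (hw : IsTest w) (hw0 : ∀ x ∈ frontier Ω, w x = 0)
    (hw1 : ∀ x ∈ frontier Ω, fderiv ℝ w x = 0)
    {e : EuclideanSpace ℝ (Fin n)} (he : ‖e‖ = 1) (a : ℝ) :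
    ∫ x in Ω, ((⟪e, x⟫ - a) * w x) * dd e (lap w) x =
      1 / 2 * energy Ω w + ∫ x in Ω, dd e w x ^ 2 := by
  have hp := contDiff_aff e a
  have hee : ⟪e, e⟫ = 1 := by rw [real_inner_self_eq_norm_sq, he]; norm_num
  have hd0 : ∀ v, ∀ x ∈ frontier Ω, dd v w x = 0 := fun v x hx => by simp [dd, hw1 x hx]
  rw [ibp hn hΩo hΩb (hw.mul_left hp) hw.lap (fun x hx => by simp [hw0 x hx]),
    dd_mul hp hw.smooth, dd_aff, hee]
  have h1 : ∫ x in Ω, ((⟪e, x⟫ - a) * dd e w x + 1 * w x) * lap w x =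
      ∫ x in Ω, (((⟪e, x⟫ - a) * dd e w x) * lap w x + w x * lap w x) := by
    congr 1; funext x; ring
  rw [h1, integral_add ((((hw.dd e).mul_left hp).mul hw.lap).int Ω) ((hw.mul hw.lap).int Ω),
    integral_mul_lap hn hΩo hΩb hw hw0,
    ibp_lap hn hΩo hΩb ((hw.dd e).mul_left hp) hw (fun x hx => by simp [hd0 e x hx])]
  have h2 : ∀ i : Fin n, ∫ x in Ω, dd (EuclideanSpace.single i 1)
      (fun x => (⟪e, x⟫ - a) * dd e w x) x * dd (EuclideanSpace.single i 1) w x =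
      -(1 / 2) * (∫ x in Ω, dd (EuclideanSpace.single i 1) w x ^ 2) +
      ∫ x in Ω, (e i * dd (EuclideanSpace.single i 1) w x) * dd e w x := by
    intro i
    set v : EuclideanSpace ℝ (Fin n) := EuclideanSpace.single i 1
    have hev : ⟪e, v⟫ = e i := by simp [v, EuclideanSpace.inner_single_right]
    rw [← integral_aff_mul_dd hn hΩo hΩb (hw.dd v) (hd0 v) he a,
      ← integral_add (((hw.dd v).mul_left hp).mul ((hw.dd v).dd e) |>.int Ω)
      (((hw.dd v).mul_left contDiff_const).mul (hw.dd e) |>.int Ω),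
      dd_mul hp (contDiff_dd hw.smooth e), dd_aff, hev, dd_comm hw.smooth v e]
    congr 1; funext x; ring
  simp only [h2]
  rw [Finset.sum_add_distrib, ← Finset.mul_sum, ← integral_finsetSum _ fun i _ =>
    (((hw.dd (EuclideanSpace.single i 1)).mul_left
      (g := fun _ => e i) contDiff_const).mul (hw.dd e)).int Ω]
  simp only [← Finset.sum_mul, sum_mul_dd]
  simp only [← pow_two]
  change -(-(-(1 / 2) * energy Ω w + _) + -energy Ω w) = _
  ring

/-- Parseval: the energy may be computed in any orthonormal basis. -/
theorem sum_integral_dd_sq (hw : IsTest w)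
    (b : OrthonormalBasis (Fin n) ℝ (EuclideanSpace ℝ (Fin n))) :
    ∑ i, ∫ x in Ω, dd (b i) w x ^ 2 = energy Ω w := by
  have key : ∀ b : OrthonormalBasis (Fin n) ℝ (EuclideanSpace ℝ (Fin n)),
      ∑ i, ∫ x in Ω, dd (b i) w x ^ 2 =
        ∫ x in Ω, ‖(InnerProductSpace.toDual ℝ _).symm (fderiv ℝ w x)‖ ^ 2 := by
    intro b
    rw [← integral_finsetSum _ fun i _ => by
      simpa only [pow_two] using ((hw.dd (b i)).mul (hw.dd (b i))).int Ω]
    congr 1; funext x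
    rw [← b.sum_sq_inner_left]
    refine Finset.sum_congr rfl fun i _ => ?_
    rw [InnerProductSpace.toDual_symm_apply, dd]
  rw [key b, ← key (EuclideanSpace.basisFun (Fin n) ℝ), energy]
  simp

end Core

/-! ### Extension, optimisation of the constant, and conclusion -/

theorem exists_isTest_eqOn {n : ℕ} {K U : Set (EuclideanSpace ℝ (Fin n))} (hK : IsCompact K)
    (hU : IsOpen U) (hKU : K ⊆ U) {u : EuclideanSpace ℝ (Fin n) → ℝ}
    (hu : ContDiffOn ℝ (⊤ : ℕ∞) u U) :
    ∃ w, IsTest w ∧ ∀ x ∈ K, w =ᶠ[nhds x] u := by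
  obtain ⟨K₁, hK₁, hKK₁, hK₁U⟩ := exists_compact_between hK hU hKU
  obtain ⟨K₂, hK₂, hK₁₂, hK₂U⟩ := exists_compact_between hK₁ hU hK₁U
  obtain ⟨χ, hχ0, hχ1, -⟩ := exists_contMDiffMap_zero_one_of_isClosed (n := (⊤ : ℕ∞))
    (modelWithCornersSelf ℝ (EuclideanSpace ℝ (Fin n)))
    (isOpen_interior (s := K₂)).isClosed_compl hK₁.isClosed
    (Set.disjoint_left.2 fun x hx hxK => hx (hK₁₂ hxK))
  have hχ : ContDiff ℝ (⊤ : ℕ∞) χ := contMDiff_iff_contDiff.1 χ.contMDiff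
  have hsupp : ∀ x, x ∉ K₂ → χ x = 0 := fun x hx => hχ0 fun h => hx (interior_subset h)
  refine ⟨fun x => χ x * u x, ⟨?_, ?_⟩, ?_⟩
  · rw [contDiff_iff_contDiffAt]
    intro x
    by_cases hx : x ∈ U
    · exact hχ.contDiffAt.mul (hu.contDiffAt (hU.mem_nhds hx))
    · refine (contDiffAt_const (c := (0 : ℝ))).congr_of_eventuallyEq ?_
      filter_upwards [hK₂.isClosed.isOpen_compl.mem_nhds fun h => hx (hK₂U h)] with y hy
      rw [hsupp y hy, zero_mul]
  · exact HasCompactSupport.intro hK₂ fun x hx => by rw [hsupp x hx, zero_mul]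
  · intro x hx
    filter_upwards [mem_interior_iff_mem_nhds.1 (hKK₁ hx)] with y hy
    have : χ y = 1 := hχ1 hy
    rw [this, one_mul]

theorem lap_eventuallyEq {n : ℕ} {f g : EuclideanSpace ℝ (Fin n) → ℝ}
    {x : EuclideanSpace ℝ (Fin n)} (h : f =ᶠ[nhds x] g) : lap f =ᶠ[nhds x] lap g := by
  filter_upwards [h.eventuallyEq_nhds] with y hy
  simp only [lap]
  refine Finset.sum_congr rfl fun i _ => ?_
  have : (fun z => fderiv ℝ f z (EuclideanSpace.single i 1)) =ᶠ[nhds y]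
      fun z => fderiv ℝ g z (EuclideanSpace.single i 1) := by
    filter_upwards [hy.fderiv (𝕜 := ℝ)] with z hz
    rw [hz]
  rw [this.fderiv_eq]

/-- Summing `hs` over `j` gives `∑ sⱼ ≤ (2(n + 2) δ + δ⁻¹) T` for `δ > 0`, which is smallest at
`δ = (2(n + 2))^{-1/2}`. -/
theorem sum_le_of_energy_bounds {n : ℕ} (s t : Fin n → ℝ) {T G : ℝ} (hTG : T ^ 2 ≤ G) (ht : ∑ j, t j = T)
    (hs : ∀ j, ∀ δ : ℝ, δ * s j ≤ δ ^ 2 * (2 * T + 4 * t j) + t j) :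
    ∑ j, s j ≤ √(8 * (n + 2) * G) := by
  set r := √(2 * (n + 2) : ℝ) with hr
  have hr2 : r ^ 2 = 2 * (n + 2) := Real.sq_sqrt (by positivity)
  have hr0 : 0 < r := Real.sqrt_pos.2 (by positivity)
  have h1 : r⁻¹ * ∑ j, s j ≤ 2 * T := by
    calc r⁻¹ * ∑ j, s j = ∑ j, r⁻¹ * s j := Finset.mul_sum _ _ _
      _ ≤ ∑ j, (r⁻¹ ^ 2 * (2 * T + 4 * t j) + t j) := Finset.sum_le_sum fun j _ => hs j _
      _ = r⁻¹ ^ 2 * (n * (2 * T) + 4 * T) + T := by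
        have h3 : ∑ j, (2 * T + 4 * t j) = n * (2 * T) + 4 * T := by
          rw [Finset.sum_add_distrib, ← Finset.mul_sum Finset.univ t 4, ht]
          simp
        rw [Finset.sum_add_distrib, ← Finset.mul_sum, ht, h3]
      _ = r⁻¹ ^ 2 * r ^ 2 * T + T := by rw [hr2]; ring
      _ = 2 * T := by rw [← mul_pow, inv_mul_cancel₀ hr0.ne']; ring
  have h2 : ∑ j, s j ≤ 2 * r * T := by
    have := mul_le_mul_of_nonneg_left h1 hr0.le
    rw [← mul_assoc, mul_inv_cancel₀ hr0.ne'] at this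
    linarith
  refine h2.trans (Real.le_sqrt_of_sq_le ?_)
  calc (2 * r * T) ^ 2 = 4 * r ^ 2 * T ^ 2 := by ring
    _ ≤ 4 * r ^ 2 * G := by gcongr
    _ = 8 * (n + 2) * G := by rw [hr2]; ring

/-- For a nonempty bounded open set `Ω ⊆ ℝⁿ` (with smooth boundary) and clamped plate
eigenvalues `Γ₁ ≤ ⋯ ≤ Γ_{n+1}` (here `Γ 0, …, Γ n`) with orthonormal eigenfunctions
satisfying the Rayleigh–Ritz property, one has
`Σ_{i=1}^{n} (Γ_{i+1} − Γ₁)^{1/2} ≤ (8(n+2)Γ₁)^{1/2}`. -/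
theorem clamped_plate_lower_eigenvalues_euclidean
    {n : ℕ} (hn : 1 ≤ n) (Ω : Set (EuclideanSpace ℝ (Fin n)))
    (hΩo : IsOpen Ω) (hΩb : Bornology.IsBounded Ω) (hΩne : Ω.Nonempty)
    (Γ : ℕ → ℝ) (u : ℕ → EuclideanSpace ℝ (Fin n) → ℝ)
    (hpos : ∀ i ≤ n, 0 < Γ i)
    (hmono : ∀ i < n, Γ i ≤ Γ (i + 1))
    (hsmooth : ∀ i ≤ n, ∃ U : Set (EuclideanSpace ℝ (Fin n)),
      IsOpen U ∧ closure Ω ⊆ U ∧ ContDiffOn ℝ (⊤ : ℕ∞) (u i) U)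
    (hbc : ∀ i ≤ n, ∀ x ∈ frontier Ω, u i x = 0 ∧ fderiv ℝ (u i) x = 0)
    (hortho : ∀ i ≤ n, ∀ j ≤ n,
      ∫ x in Ω, u i x * u j x = if i = j then 1 else 0)
    (heigen : ∀ i ≤ n, ∀ x ∈ Ω, bilap (u i) x = Γ i * u i x)
    (hRR : ∀ k, 1 ≤ k → k ≤ n → ∀ φ : EuclideanSpace ℝ (Fin n) → ℝ,
      (∃ U : Set (EuclideanSpace ℝ (Fin n)),
        IsOpen U ∧ closure Ω ⊆ U ∧ ContDiffOn ℝ (⊤ : ℕ∞) φ U) →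
      (∀ x ∈ frontier Ω, φ x = 0 ∧ fderiv ℝ φ x = 0) →
      ¬ (φ =ᵐ[volume.restrict Ω] 0) →
      (∀ j < k, ∫ x in Ω, φ x * u j x = 0) →
      Γ k * ∫ x in Ω, (φ x) ^ 2 ≤ ∫ x in Ω, φ x * bilap φ x) :
    ∑ i ∈ Finset.range n, Real.sqrt (Γ (i + 1) - Γ 0) ≤
      Real.sqrt (8 * (n + 2) * Γ 0) := by
  -- a globally defined, compactly supported copy of the first eigenfunction
  have hcomp : IsCompact (closure Ω) := hΩb.isCompact_closure
  obtain ⟨U, hU, hΩU, huU⟩ := hsmooth 0 (Nat.zero_le n)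
  obtain ⟨w, hw, hwu⟩ := exists_isTest_eqOn hcomp hU hΩU huU
  have hwΩ : ∀ x ∈ Ω, w x = u 0 x := fun x hx => (hwu x (subset_closure hx)).eq_of_nhds
  have hw0 : ∀ x ∈ frontier Ω, w x = 0 := fun x hx => by
    rw [(hwu x hx.1).eq_of_nhds, (hbc 0 (Nat.zero_le n) x hx).1]
  have hw1 : ∀ x ∈ frontier Ω, fderiv ℝ w x = 0 := fun x hx => by
    rw [(hwu x hx.1).fderiv_eq, (hbc 0 (Nat.zero_le n) x hx).2]
  have hweig : ∀ x ∈ Ω, bilap w x = Γ 0 * w x := fun x hx => by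
    rw [hwΩ x hx, ← heigen 0 (Nat.zero_le n) x hx]
    exact (lap_eventuallyEq (lap_eventuallyEq (hwu x (subset_closure hx)))).eq_of_nhds
  have hworth : ∀ j ≤ n, ∫ x in Ω, w x * u j x = if 0 = j then 1 else 0 := by
    intro j hj
    rw [← hortho 0 (Nat.zero_le n) j hj]
    exact setIntegral_congr_fun hΩo.measurableSet fun x hx => by simp only [hwΩ x hx]
  have hnorm : ∫ x in Ω, w x ^ 2 = 1 := by
    rw [← (hworth 0 (Nat.zero_le n)).trans (if_pos rfl)]
    exact setIntegral_congr_fun hΩo.measurableSet fun x hx => by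
      simp only [hwΩ x hx, pow_two]
  have hTG : energy Ω w ^ 2 ≤ Γ 0 := by
    refine (energy_sq_le hn hΩo hΩb hw hw0 hw1 hnorm).trans_eq ?_
    rw [← mul_one (Γ 0), ← hnorm, ← integral_const_mul]
    exact setIntegral_congr_fun hΩo.measurableSet fun x hx => by
      simp only [hweig x hx]; ring
  have hcont : ∀ j ≤ n, ContinuousOn (u j) (closure Ω) := fun j hj => by
    obtain ⟨V, -, hΩV, hV⟩ := hsmooth j hj
    exact hV.continuousOn.mono hΩV
  have hintw : ∀ j ≤ n, Integrable (fun x => w x * u j x) (volume.restrict Ω) := fun j hj =>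
    ((hw.smooth.continuous.continuousOn.mul (hcont j hj)).integrableOn_compact hcomp).mono_set
      subset_closure
  have hintv : ∀ j ≤ n, Integrable (fun x => (w x * u j x) • x) (volume.restrict Ω) := fun j hj =>
    (((hw.smooth.continuous.continuousOn.mul (hcont j hj)).smul
      continuousOn_id).integrableOn_compact hcomp).mono_set subset_closure
  -- the moments of the products `u₀ uⱼ`, and coordinates triangular with respect to them
  set B : ℕ → EuclideanSpace ℝ (Fin n) := fun j => ∫ x in Ω, (w x * u j x) • x with hB
  have hBe : ∀ j ≤ n, ∀ (e : EuclideanSpace ℝ (Fin n)) (a : ℝ),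
      ∫ x in Ω, ((⟪e, x⟫ - a) * w x) * u j x = ⟪e, B j⟫ - a * if 0 = j then 1 else 0 := by
    intro j hj e a
    rw [hB, ← integral_inner (hintv j hj) e, ← hworth j hj, ← integral_const_mul,
      ← integral_sub ((hintv j hj).const_inner e) ((hintw j hj).const_mul a)]
    congr 1
    funext x
    rw [inner_smul_right]
    ring
  set b := InnerProductSpace.gramSchmidtOrthonormalBasis (𝕜 := ℝ)
    (E := EuclideanSpace ℝ (Fin n)) (ι := Fin n) (by simp) (fun i : Fin n => B (i + 1)) with hb
  have hbB : ∀ i j : Fin n, i < j → ⟪b j, B (i + 1)⟫ = 0 := fun i j hij =>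
    InnerProductSpace.gramSchmidtOrthonormalBasis_inv_triangular _ _ hij
  rw [Finset.sum_range]
  refine sum_le_of_energy_bounds _ (fun j => ∫ x in Ω, dd (b j) w x ^ 2) hTG
    (sum_integral_dd_sq hw b) ?_
  intro j δ
  have he : ‖b j‖ = 1 := b.norm_eq_one j
  set a : ℝ := ⟪b j, B 0⟫ with ha
  set φ : EuclideanSpace ℝ (Fin n) → ℝ := fun x => (⟪b j, x⟫ - a) * w x with hφ
  have hφt : IsTest φ := hw.mul_left (contDiff_aff (b j) a)
  have hφd : ∫ x in Ω, φ x * dd (b j) w x = -(1 / 2) := by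
    rw [integral_aff_mul_dd hn hΩo hΩb hw hw0 he a, hnorm, mul_one]
  have hφ1 : ∀ x ∈ frontier Ω, φ x = 0 ∧ fderiv ℝ φ x = 0 := by
    intro x hx
    refine ⟨by simp [hφ, hw0 x hx], ?_⟩
    ext v
    change dd v φ x = 0
    rw [hφ, dd_mul (contDiff_aff (b j) a) hw.smooth]
    simp [dd, hw0 x hx, hw1 x hx]
  have hφne : ¬ (φ =ᵐ[volume.restrict Ω] 0) := by
    intro h
    have : ∫ x in Ω, φ x * dd (b j) w x = 0 := by
      rw [← integral_zero (EuclideanSpace ℝ (Fin n)) ℝ (μ := volume.restrict Ω)]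
      refine integral_congr_ae ?_
      filter_upwards [h] with x hx
      rw [hx]; simp
    rw [hφd] at this
    norm_num at this
  have hφorth : ∀ k < (j : ℕ) + 1, ∫ x in Ω, φ x * u k x = 0 := by
    intro k hk
    have hkn : k ≤ n := by omega
    rw [hφ, hBe k hkn]
    rcases k with _ | k
    · simp [ha]
    · have := hbB ⟨k, by omega⟩ j (by rw [Fin.lt_def]; simp only; omega)
      simp only at this
      rw [this]; simp
  have hR := hRR (j + 1) (by omega) (by omega) φ ⟨Set.univ, isOpen_univ, Set.subset_univ _,
    hφt.smooth.contDiffOn⟩ hφ1 hφne hφorth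
  have hbil : ∫ x in Ω, φ x * bilap φ x =
      Γ 0 * (∫ x in Ω, φ x ^ 2) + 4 * ∫ x in Ω, φ x * dd (b j) (lap w) x := by
    rw [← integral_const_mul, ← integral_const_mul, ← integral_add
      (by simpa only [pow_two] using ((hφt.mul hφt).int Ω).const_mul _)
      (((hφt.mul (hw.lap.dd (b j))).int Ω).const_mul _)]
    refine setIntegral_congr_fun hΩo.measurableSet fun x hx => ?_
    simp only [hφ, bilap_aff_mul hw.smooth, hweig x hx]
    ring
  rw [hbil, integral_aff_mul_dd_lap hn hΩo hΩb hw hw0 hw1 he a] at hR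
  have hΓ : Γ 0 ≤ Γ (j + 1) := by
    have : ∀ k ≤ n, Γ 0 ≤ Γ k := by
      intro k
      induction k with
      | zero => exact fun _ => le_rfl
      | succ k ih => exact fun hk => (ih (by omega)).trans (hmono k (by omega))
    exact this _ (by omega)
  have hsq : √(Γ (j + 1) - Γ 0) ^ 2 = Γ (j + 1) - Γ 0 := Real.sq_sqrt (by linarith)
  have hq := quadratic_nonneg Ω (hw.dd (b j)) hφt (δ * √(Γ (j + 1) - Γ 0))
  simp only [mul_comm (dd (b j) w _)] at hq
  rw [hφd, mul_pow, hsq] at hq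
  have := mul_le_mul_of_nonneg_left hR (sq_nonneg δ)
  linarith
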